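/- The series ∑_{n=0}^∞ [(1/2)_n (1/6)_n (5/6)_n / ((1)_n)^3] · ((74n + 7)/(2n + 1)) · (27/64)^n converges and has sum 8. -/

import Mathlib

open Real

/-- `poch a n` is the rising factorial (Pochhammer symbol) `(a)ₙ = a(a+1)⋯(a+n−1)`. -/
noncomputable def poch (a : ℝ) (n : ℕ) : ℝ := (ascPochhammer ℝ n).eval a

theorem poch_succ' (a : ℝ) (n : ℕ) : poch a (n+1) = poch a n * (a + n) := by
  simp [poch, ascPochhammer_succ_eval]

theorem poch_zero' (a : ℝ) : poch a 0 = 1 := by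
  simp [poch]

theorem poch_pos' (a : ℝ) (ha : 0 < a) (n : ℕ) : 0 < poch a n := ascPochhammer_pos n a ha

/-- The hypergeometric kernel of the WZ pair. -/
noncomputable def hh (n K : ℕ) : ℝ :=
  poch (1/2) (3*n+2*K) * poch (1/2) n ^ 4 * (K.factorial : ℝ)^2 /
    (((2*n+K).factorial : ℝ)^2 * ((2*n).factorial : ℝ) * poch (1/2) (n+2*K))

theorem hh_pos (n K : ℕ) : 0 < hh n K := by
  have h1 := poch_pos' (1/2) (by norm_num) (3*n+2*K)
  have h2 := poch_pos' (1/2) (by norm_num) n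
  have h3 := poch_pos' (1/2) (by norm_num) (n+2*K)
  unfold hh
  positivity

theorem hh_succ_K (n K : ℕ) : hh n (K+1) = hh n K *
    ((3*n+2*K+1/2)*(3*n+2*K+3/2)*(K+1)^2 /
      ((2*n+K+1)^2*(n+2*K+1/2)*(n+2*K+3/2))) := by
  have h1 := poch_pos' (1/2) (by norm_num) (3*n+2*K)
  have h2 := poch_pos' (1/2) (by norm_num) n
  have h3 := poch_pos' (1/2) (by norm_num) (n+2*K)
  unfold hh
  rw [show 3*n+2*(K+1) = 3*n+2*K+1+1 by ring, show n+2*(K+1) = n+2*K+1+1 by ring,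
    show 2*n+(K+1) = 2*n+K+1 by ring, poch_succ', poch_succ', poch_succ', poch_succ',
    Nat.factorial_succ, Nat.factorial_succ]
  have h4 : (0:ℝ) < (2*n+K).factorial := by positivity
  have h5 : (0:ℝ) < (2*n).factorial := by positivity
  generalize poch (1/2) (3*n+2*K) = A at *
  generalize poch (1/2) (n+2*K) = B at *
  generalize poch (1/2) n = C at *
  push_cast
  generalize ((2*n+K).factorial : ℝ) = D at *
  generalize ((2*n).factorial : ℝ) = E at *
  rw [← mul_div_mul_comm, div_eq_div_iff (by positivity) (by positivity)]
  ring

theorem hh_succ_n (n K : ℕ) : hh (n+1) K = hh n K *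
    ((3*n+2*K+1/2)*(3*n+2*K+3/2)*(3*n+2*K+5/2)*(n+1/2)^4 /
      (((2*n+K+1)*(2*n+K+2))^2*((2*n+1)*(2*n+2))*(n+2*K+1/2))) := by
  have h1 := poch_pos' (1/2) (by norm_num) (3*n+2*K)
  have h2 := poch_pos' (1/2) (by norm_num) n
  have h3 := poch_pos' (1/2) (by norm_num) (n+2*K)
  unfold hh
  rw [show 3*(n+1)+2*K = 3*n+2*K+1+1+1 by ring, show n+1+2*K = n+2*K+1 by ring,
    show 2*(n+1)+K = 2*n+K+1+1 by ring, show 2*(n+1) = 2*n+1+1 by ring]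
  simp only [poch_succ', Nat.factorial_succ]
  have h4 : (0:ℝ) < (2*n+K).factorial := by positivity
  have h5 : (0:ℝ) < (2*n).factorial := by positivity
  have h6 : (0:ℝ) < K.factorial := by positivity
  push_cast
  generalize poch (1/2) (3*n+2*K) = A at *
  generalize poch (1/2) (n+2*K) = B at *
  generalize poch (1/2) n = C at *
  generalize ((2*n+K).factorial : ℝ) = D at *
  generalize ((2*n).factorial : ℝ) = E at *
  generalize (K.factorial : ℝ) = G at *
  rw [← mul_div_mul_comm, div_eq_div_iff (by positivity) (by positivity)]
  ring

theorem hh_zero (n : ℕ) : poch (1/2) n * poch (1/6) n * poch (5/6) n / (poch 1 n)^3 * (27/64)^n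
    = hh n 0 := by
  induction n with
  | zero => simp [hh, poch_zero']
  | succ n ih =>
    have h1 := poch_pos' 1 (by norm_num) n
    rw [hh_succ_n, ← ih]
    simp only [poch_succ']
    generalize poch (1/2) n = A at *
    generalize poch (1/6) n = B at *
    generalize poch (5/6) n = C at *
    generalize poch 1 n = D at *
    push_cast
    field_simp
    ring

theorem hh_le_zero (n K : ℕ) : hh n K ≤ hh n 0 := by
  induction K with
  | zero => exact le_rfl
  | succ K ih =>
    refine le_trans ?_ ih
    rw [hh_succ_K]
    refine mul_le_of_le_one_right (hh_pos n K).le ?_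
    rw [div_le_one (by positivity)]
    have hn : (n:ℝ) ≤ n^2 := by exact_mod_cast Nat.le_self_pow (by norm_num) n
    have a1 : (3*n+2*K+1/2)*((K:ℝ)+1) ≤ (2*n+K+1)*(n+2*K+1/2) := by
      have : (0:ℝ) ≤ n*K := by positivity
      nlinarith
    have a2 : (3*n+2*K+3/2)*((K:ℝ)+1) ≤ (2*n+K+1)*(n+2*K+3/2) := by
      have : (0:ℝ) ≤ n*K := by positivity
      nlinarith
    have := mul_le_mul a1 a2 (by positivity) (by positivity)
    nlinarith

theorem hh_le_pow (n K : ℕ) : hh n K ≤ (27/64)^n := by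
  refine le_trans (hh_le_zero n K) ?_
  induction n with
  | zero => simp [hh, poch_zero']
  | succ n ih =>
    rw [hh_succ_n, pow_succ, Nat.cast_zero]
    refine mul_le_mul ih ?_ ?_ ?_
    rotate_left
    · positivity
    · exact pow_nonneg (by norm_num) n
    rw [div_le_iff₀ (by positivity)]
    have hn : (0:ℝ) ≤ n := by positivity
    generalize (n:ℝ) = x at *
    push_cast
    rw [← sub_nonneg]
    ring_nf
    positivity

theorem hh_tendsto (n : ℕ) : Filter.Tendsto (fun K => hh (n+1) K) Filter.atTop (nhds 0) := by
  have hb : ∀ K : ℕ, hh (n+1) K ≤ 12 * (n+1)^4 * (1 / ((K:ℝ)+1)) := by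
    intro K
    rw [hh_succ_n]
    have h1 : hh n K ≤ 1 := (hh_le_pow n K).trans (pow_le_one₀ (by norm_num) (by norm_num))
    refine (mul_le_of_le_one_left (by positivity) h1).trans ?_
    rw [mul_one_div, div_le_div_iff₀ (by positivity) (by positivity)]
    have a1 : (3*n+2*K+1/2 : ℝ) ≤ 3 * (n+2*K+1/2) := by
      have : (0:ℝ) ≤ K := by positivity
      linarith
    have a2 : (3*n+2*K+3/2 : ℝ) ≤ 2 * (2*n+K+1) := by
      have : (0:ℝ) ≤ n := by positivity
      linarith
    have a3 : (3*n+2*K+5/2 : ℝ) ≤ 2 * (2*n+K+2) := by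
      have : (0:ℝ) ≤ n := by positivity
      linarith
    have a4 : ((n:ℝ)+1/2)^4 ≤ (n+1)^4 := by gcongr; norm_num
    have a5 : (K:ℝ)+1 ≤ (2*n+K+1)*(2*n+K+2)*((2*n+1)*(2*n+2)) := by
      have hn : (0:ℝ) ≤ n := by positivity
      have hK : (0:ℝ) ≤ K := by positivity
      rw [← sub_nonneg]; ring_nf
      have : (0:ℝ) ≤ 3 + n * 1 := by positivity
      positivity
    calc (3*n+2*K+1/2 : ℝ)*(3*n+2*K+3/2)*(3*n+2*K+5/2)*(n+1/2)^4 * (K+1)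
        ≤ (3 * (n+2*K+1/2)) * (2 * (2*n+K+1)) * (2 * (2*n+K+2)) * (n+1)^4 *
          ((2*n+K+1)*(2*n+K+2)*((2*n+1)*(2*n+2))) := by gcongr
      _ = _ := by ring
  have hl : Filter.Tendsto (fun K : ℕ => 12 * ((n:ℝ)+1)^4 * (1 / ((K:ℝ)+1))) Filter.atTop
      (nhds 0) := by
    simpa using (tendsto_one_div_add_atTop_nhds_zero_nat (𝕜 := ℝ)).const_mul (12 * ((n:ℝ)+1)^4)
  exact squeeze_zero (fun K => (hh_pos _ K).le) hb hl

/-- Rational factor of the summand. -/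
noncomputable def RR (n K : ℝ) : ℝ :=
  (7/2 + 22*K + 36*K^2 + 16*K^3 + 51*n + 152*n*K + 104*n*K^2 + 162*n^2 + 216*n^2*K + 148*n^3) /
    ((n+2*K+1/2)*(2*n+K+1)^2)

/-- Rational factor of the WZ mate. -/
noncomputable def SS (n K : ℝ) : ℝ :=
  32*n*(2*n+2*K+1) / ((n+2*K+1/2)*(n+2*K+3/2))

theorem wz (n K : ℕ) : hh n (K+1) * RR n (K+1) - hh n K * RR n K =
    hh (n+1) K * SS (n+1) K - hh n K * SS n K := by
  rw [hh_succ_K, hh_succ_n]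
  unfold RR SS
  have hn : (0:ℝ) ≤ n := by positivity
  have hK : (0:ℝ) ≤ K := by positivity
  generalize (n:ℝ) = x at *
  generalize (K:ℝ) = y at *
  have e1 : 2*x+(y+1)+1 = 2*x+y+2 := by ring
  have e2 : x+2*(y+1)+1/2 = x+2*y+5/2 := by ring
  have e3 : x+1+2*y+1/2 = x+2*y+3/2 := by ring
  have e4 : x+1+2*y+3/2 = x+2*y+5/2 := by ring
  rw [e1, e2, e3, e4]
  have p1 : x+2*y+1/2 ≠ 0 := by positivity
  have p2 : x+2*y+3/2 ≠ 0 := by positivity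
  have p3 : x+2*y+5/2 ≠ 0 := by positivity
  have p4 : 2*x+y+1 ≠ 0 := by positivity
  have p5 : 2*x+y+2 ≠ 0 := by positivity
  have p6 : 2*x+1 ≠ 0 := by positivity
  have p7 : 2*x+2 ≠ 0 := by positivity
  have key : (3*x+2*y+1/2)*(3*x+2*y+3/2)*(y+1)^2 /
      ((2*x+y+1)^2*(x+2*y+1/2)*(x+2*y+3/2)) *
      ((7/2 + 22*(y+1) + 36*(y+1)^2 + 16*(y+1)^3 + 51*x + 152*x*(y+1) + 104*x*(y+1)^2 + 162*x^2
        + 216*x^2*(y+1) + 148*x^3) / ((x+2*y+5/2)*(2*x+y+2)^2))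
      - (7/2 + 22*y + 36*y^2 + 16*y^3 + 51*x + 152*x*y + 104*x*y^2 + 162*x^2
        + 216*x^2*y + 148*x^3) / ((x+2*y+1/2)*(2*x+y+1)^2)
      = (3*x+2*y+1/2)*(3*x+2*y+3/2)*(3*x+2*y+5/2)*(x+1/2)^4 /
      (((2*x+y+1)*(2*x+y+2))^2*((2*x+1)*(2*x+2))*(x+2*y+1/2)) *
      (32*(x+1)*(2*(x+1)+2*y+1) / ((x+2*y+3/2)*(x+2*y+5/2)))
      - 32*x*(2*x+2*y+1) / ((x+2*y+1/2)*(x+2*y+3/2)) := by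
    have p1 : x*2+4*y+1 ≠ 0 := by positivity
    rw [← mul_div_mul_comm, ← mul_div_mul_comm, div_sub_div _ _ (by positivity) (by positivity),
      div_sub_div _ _ (by positivity) (by positivity),
      div_eq_div_iff (by positivity) (by positivity)]
    ring
  linear_combination (hh n K) * key

theorem RR_nonneg (n K : ℕ) : 0 ≤ RR n K := by unfold RR; positivity

theorem RR_le (n K : ℕ) : RR n K ≤ 37 := by
  unfold RR
  rw [div_le_iff₀ (by positivity)]
  have hn : (0:ℝ) ≤ n := by positivity
  have hK : (0:ℝ) ≤ K := by positivity
  generalize (n:ℝ) = x at *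
  generalize (K:ℝ) = y at *
  rw [← sub_nonneg]
  ring_nf
  positivity

theorem SS_nonneg (n K : ℕ) : 0 ≤ SS n K := by unfold SS; positivity

theorem SS_le (n K : ℕ) : SS n K ≤ 64 := by
  unfold SS
  rw [div_le_iff₀ (by positivity)]
  have hn : (0:ℝ) ≤ n := by positivity
  have hK : (0:ℝ) ≤ K := by positivity
  generalize (n:ℝ) = x at *
  generalize (K:ℝ) = y at *
  rw [← sub_nonneg]
  ring_nf
  positivity

theorem pow_summable : Summable (fun n : ℕ => (37:ℝ) * (27/64)^n) :=
  (summable_geometric_of_lt_one (by norm_num) (by norm_num)).mul_left _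

theorem HH_bound (n K : ℕ) : ‖hh n K * RR n K‖ ≤ 37 * (27/64)^n := by
  have h1 := hh_pos n K
  have h2 := RR_nonneg n K
  rw [Real.norm_of_nonneg (by positivity), mul_comm]
  exact mul_le_mul (RR_le n K) (hh_le_pow n K) h1.le (by norm_num)

theorem HH_summable (K : ℕ) : Summable (fun n : ℕ => hh n K * RR n K) :=
  Summable.of_norm_bounded pow_summable (fun n => HH_bound n K)

theorem QQ_tendsto (K : ℕ) :
    Filter.Tendsto (fun n : ℕ => hh n K * SS n K) Filter.atTop (nhds 0) := by
  have hl : Filter.Tendsto (fun n : ℕ => (27/64:ℝ)^n * 64) Filter.atTop (nhds 0) := by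
    simpa using (tendsto_pow_atTop_nhds_zero_of_lt_one (r := (27/64:ℝ)) (by norm_num)
      (by norm_num)).mul_const 64
  refine squeeze_zero (fun n => mul_nonneg (hh_pos n K).le (SS_nonneg n K)) (fun n => ?_) hl
  exact mul_le_mul (hh_le_pow n K) (SS_le n K) (SS_nonneg n K) (by positivity)

theorem tsum_step (K : ℕ) : ∑' n : ℕ, hh n (K+1) * RR n (K+1) = ∑' n : ℕ, hh n K * RR n K := by
  have hs1 : Summable (fun n : ℕ => hh n (K+1) * RR n (K+1)) := by
    simpa using HH_summable (K+1)
  have hs := (hs1.hasSum.sub (HH_summable K).hasSum).tendsto_sum_nat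
  have ht : Filter.Tendsto (fun N : ℕ => ∑ n ∈ Finset.range N,
      (hh n (K+1) * RR n (K+1) - hh n K * RR n K)) Filter.atTop (nhds 0) := by
    have : ∀ N : ℕ, ∑ n ∈ Finset.range N, (hh n (K+1) * RR n (K+1) - hh n K * RR n K)
        = hh N K * SS N K := by
      intro N
      induction N with
      | zero => simp [SS]
      | succ N ih => rw [Finset.sum_range_succ, ih, wz]; push_cast; ring
    simp only [this]
    exact QQ_tendsto K
  exact sub_eq_zero.mp (tendsto_nhds_unique hs ht)

theorem hhRR_tsum_const (K : ℕ) : ∑' n : ℕ, hh n K * RR n K = ∑' n : ℕ, hh n 0 * RR n 0 := by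
  induction K with
  | zero => simp
  | succ K ih => rw [← ih, ← tsum_step K]; push_cast; rfl

theorem hh_zero_left (K : ℕ) : hh 0 K = 1 := by
  have h3 := poch_pos' (1/2) (by norm_num) (2*K)
  have h6 : (0:ℝ) < K.factorial := by positivity
  simp only [hh, mul_zero, zero_add, poch_zero', Nat.factorial_zero]
  field_simp
  norm_num

theorem RR_zero_tendsto :
    Filter.Tendsto (fun K : ℕ => RR 0 K) Filter.atTop (nhds 8) := by
  have hl := (tendsto_one_div_add_atTop_nhds_zero_nat (𝕜 := ℝ))
  have hb : ∀ K : ℕ, |RR 0 K - 8| ≤ 8 * (1 / ((K:ℝ)+1)) := by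
    intro K
    have hK : (0:ℝ) ≤ K := by positivity
    unfold RR
    generalize (K:ℝ) = y at *
    have : (7/2 + 22*y + 36*y^2 + 16*y^3 + 51*0 + 152*0*y + 104*0*y^2 + 162*0^2 + 216*0^2*y
      + 148*0^3) / ((0+2*y+1/2)*(2*0+y+1)^2) - 8 = - (1/2 + 2*y) / ((2*y+1/2)*(y+1)^2) := by
      field_simp
      ring
    rw [this, neg_div, abs_neg, abs_of_nonneg (by positivity), mul_one_div,
      div_le_div_iff₀ (by positivity) (by positivity), ← sub_nonneg]
    ring_nf
    positivity
  rw [tendsto_iff_norm_sub_tendsto_zero]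
  refine squeeze_zero (fun K => norm_nonneg _) hb ?_
  simpa using hl.const_mul 8

theorem tsum_tendsto :
    Filter.Tendsto (fun K : ℕ => ∑' n : ℕ, hh n K * RR n K) Filter.atTop (nhds 8) := by
  have := tendsto_tsum_of_dominated_convergence (𝓕 := Filter.atTop)
    (f := fun (K : ℕ) (n : ℕ) => hh n K * RR n K) (g := fun n : ℕ => if n = 0 then (8:ℝ) else 0)
    pow_summable ?_ (Filter.Eventually.of_forall fun K n => HH_bound n K)
  · simpa using this
  · intro n
    rcases n with _ | n
    · simpa [hh_zero_left] using RR_zero_tendsto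
    · have h0 : Filter.Tendsto (fun K => hh (n+1) K * 37) Filter.atTop (nhds 0) := by
        simpa using (hh_tendsto n).mul_const 37
      simp only [Nat.add_eq_zero_iff, one_ne_zero, and_false, if_false]
      exact squeeze_zero (fun K => mul_nonneg (hh_pos _ K).le (RR_nonneg _ K))
        (fun K => mul_le_mul_of_nonneg_left (RR_le _ K) (hh_pos _ K).le) h0

theorem chu_zhang_series_74n_7 :
    HasSum (fun n : ℕ =>
      poch (1/2) n * poch (1/6) n * poch (5/6) n / (poch 1 n)^3 *
        ((74 * (n : ℝ) + 7) / (2 * n + 1)) * (27/64)^n)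
      8 := by
  have h8 : ∑' n : ℕ, hh n 0 * RR n 0 = 8 := by
    refine tendsto_nhds_unique (l := Filter.atTop) (f := fun _ : ℕ => ∑' n : ℕ, hh n 0 * RR n 0)
      tendsto_const_nhds ?_
    simpa only [hhRR_tsum_const] using tsum_tendsto
  have hs : HasSum (fun n : ℕ => hh n 0 * RR n 0) 8 := by
    rw [← h8]
    have := (HH_summable 0).hasSum
    simpa using this
  convert hs using 2 with n
  rw [← hh_zero]
  have : RR n 0 = (74 * (n : ℝ) + 7) / (2 * n + 1) := by
    unfold RR
    rw [div_eq_div_iff (by positivity) (by positivity)]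
    ring
  rw [this]
  ring
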